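/- arXiv:1301.2346 — 3 statements merged into one kernel-verified Lean document; each statement's English description precedes it below -/
import Mathlib

section
/- Let X be a reflexive Banach space, let τ ∈ ℝ, and let 1 ≤ p₁ < ∞ and 1 < p₂ ≤ ∞. Suppose f : [τ,∞) → X is locally absolutely continuous with almost-everywhere derivative f_t, that f ∈ L^{p₁}(τ,∞;X) (i.e. ∫_τ^∞ ‖f(s)‖_X^{p₁} ds < ∞), and that f_t is translation bounded in L^{p₂}, i.e. sup_{t ≥ τ} (∫_t^{t+1} ‖f_t(s)‖_X^{p₂} ds)^{1/p₂} < ∞ (essential supremum norm on each interval when p₂ = ∞). Then ‖f(t)‖_X → 0 as t → ∞. -/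
open MeasureTheory Set Filter
open scoped ENNReal

/-- If `X` is a reflexive Banach space, `f ∈ L^{p₁}(τ,∞;X)` with `1 ≤ p₁ < ∞`, `f` is locally
absolutely continuous with a.e. derivative `f'`, and `f'` is translation bounded in `L^{p₂}`
with `1 < p₂ ≤ ∞`, then `‖f(t)‖ → 0` as `t → ∞`. -/
theorem norm_tendsto_zero_of_Lp_of_deriv_translation_bounded
    {X : Type*} [NormedAddCommGroup X] [NormedSpace ℝ X] [CompleteSpace X]
    (hrefl : Function.Surjective (NormedSpace.inclusionInDoubleDual ℝ X))
    (τ : ℝ) (p₁ : ℝ) (p₂ : ℝ≥0∞) (hp₁ : 1 ≤ p₁) (hp₂ : 1 < p₂)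
    (f f' : ℝ → X)
    (hf'int : ∀ a b : ℝ, τ ≤ a → a ≤ b → IntervalIntegrable f' volume a b)
    (hAC : ∀ a b : ℝ, τ ≤ a → a ≤ b → f b - f a = ∫ s in a..b, f' s)
    (hfmeas : AEStronglyMeasurable f (volume.restrict (Ioi τ)))
    (hfLp : ∫⁻ s in Ioi τ, ENNReal.ofReal (‖f s‖ ^ p₁) < ⊤)
    (htb : ∃ C : ℝ≥0∞, C < ⊤ ∧
      ∀ t : ℝ, τ ≤ t → eLpNorm f' p₂ (volume.restrict (Ioc t (t + 1))) ≤ C) :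
    Tendsto (fun t => ‖f t‖) atTop (nhds 0) := by
  obtain ⟨C, hC, hC'⟩ := htb
  have hα : 0 < 1 / (1 : ℝ≥0∞).toReal - 1 / p₂.toReal := by
    rcases eq_or_ne p₂ ⊤ with h | h
    · simp [h]
    · have : 1 < p₂.toReal := by
        rw [← ENNReal.toReal_one]
        exact (ENNReal.toReal_lt_toReal ENNReal.one_ne_top h).2 hp₂
      have h2 : 1 / p₂.toReal < 1 := by
        rw [div_lt_one (by linarith)]; exact this
      simp only [ENNReal.toReal_one, div_one] at *
      linarith
  generalize hαdef : 1 / (1 : ℝ≥0∞).toReal - 1 / p₂.toReal = α at hα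
  have key : ∀ a b : ℝ, τ ≤ a → a ≤ b → b ≤ a + 1 →
      ‖f b - f a‖ₑ ≤ C * ENNReal.ofReal (b - a) ^ α := by
    intro a b ha hab hb
    rw [hAC a b ha hab, intervalIntegral.integral_of_le hab]
    refine (enorm_integral_le_lintegral_enorm _).trans ?_
    rw [← eLpNorm_one_eq_lintegral_enorm]
    have hm : AEStronglyMeasurable f' (volume.restrict (Ioc a b)) :=
      ((intervalIntegrable_iff_integrableOn_Ioc_of_le hab).1 (hf'int a b ha hab)).1
    refine (eLpNorm_le_eLpNorm_mul_rpow_measure_univ hp₂.le hm).trans ?_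
    rw [hαdef, Measure.restrict_apply_univ, Real.volume_Ioc]
    gcongr
    refine le_trans (eLpNorm_mono_measure _ ?_) (hC' a ha)
    exact Measure.restrict_mono (Ioc_subset_Ioc_right hb) le_rfl
  have htail : Tendsto (fun t => ∫⁻ s in Ioi t, ENNReal.ofReal (‖f s‖ ^ p₁)
      ∂(volume.restrict (Ioi τ))) atTop (nhds 0) := by
    have hfin : IsFiniteMeasure ((volume.restrict (Ioi τ)).withDensity
        (fun s => ENNReal.ofReal (‖f s‖ ^ p₁))) := isFiniteMeasure_withDensity hfLp.ne
    have h := tendsto_measure_iInter_atTop (μ := (volume.restrict (Ioi τ)).withDensity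
        (fun s => ENNReal.ofReal (‖f s‖ ^ p₁))) (s := fun t : ℝ => Ioi t)
        (fun t => measurableSet_Ioi.nullMeasurableSet)
        (fun a b hab => Ioi_subset_Ioi hab) ⟨0, measure_ne_top _ _⟩
    have he : (⋂ t : ℝ, Ioi t) = ∅ := by
      ext x
      simp only [mem_iInter, mem_Ioi, mem_empty_iff_false, iff_false, not_forall]
      exact ⟨x, lt_irrefl x⟩
    rw [he, measure_empty] at h
    refine h.congr fun t => ?_
    simp only [Function.comp, withDensity_apply _ (measurableSet_Ioi (a := t))]
  rw [Metric.tendsto_atTop]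
  intro ε hε
  have hδ : ∃ δ : ℝ, 0 < δ ∧ δ ≤ 1 ∧ C * ENNReal.ofReal δ ^ α < ENNReal.ofReal (ε / 2) := by
    have h1 : Tendsto (fun δ : ℝ => C * ENNReal.ofReal δ ^ α) (nhds 0) (nhds 0) := by
      have h2 : Tendsto (fun δ : ℝ => ENNReal.ofReal δ ^ α) (nhds 0) (nhds 0) := by
        have h3 : Continuous (fun δ : ℝ => ENNReal.ofReal δ ^ α) :=
          ENNReal.continuous_rpow_const.comp ENNReal.continuous_ofReal
        have := h3.tendsto 0
        simpa [ENNReal.zero_rpow_of_pos hα] using this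
      simpa using ENNReal.Tendsto.const_mul h2 (Or.inr hC.ne)
    have h4 := (h1.mono_left (nhdsWithin_le_nhds (s := Ioi 0))).eventually_lt_const
      (show (0 : ℝ≥0∞) < ENNReal.ofReal (ε / 2) by simpa using hε)
    have h5 : ∀ᶠ δ : ℝ in nhdsWithin 0 (Ioi 0), δ ∈ Ioc (0 : ℝ) 1 := Ioc_mem_nhdsGT one_pos
    obtain ⟨δ, h6, h7⟩ := (h4.and h5).exists
    exact ⟨δ, h7.1, h7.2, h6⟩
  obtain ⟨δ, hδ0, hδ1, hδε⟩ := hδ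
  have hpos : (0 : ℝ≥0∞) < ENNReal.ofReal ((ε / 2) ^ p₁) * ENNReal.ofReal δ := by
    refine ENNReal.mul_pos ?_ ?_
    · simpa using Real.rpow_pos_of_pos (half_pos hε) p₁
    · simpa using hδ0
  obtain ⟨N, hN⟩ := eventually_atTop.1 (htail.eventually_lt_const hpos)
  refine ⟨max N τ, fun t ht => ?_⟩
  have htN : N ≤ t := (le_max_left _ _).trans ht
  have htτ : τ ≤ t := (le_max_right _ _).trans ht
  rw [dist_zero_right, norm_norm]
  by_contra! hcon
  refine absurd (hN t htN) (not_lt.2 ?_)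
  rw [Measure.restrict_restrict measurableSet_Ioi,
    inter_eq_self_of_subset_left (Ioi_subset_Ioi htτ)]
  calc ENNReal.ofReal ((ε / 2) ^ p₁) * ENNReal.ofReal δ
      = ∫⁻ s in Ioc t (t + δ), ENNReal.ofReal ((ε / 2) ^ p₁) := by
        rw [setLIntegral_const, Real.volume_Ioc, add_sub_cancel_left]
    _ ≤ ∫⁻ s in Ioc t (t + δ), ENNReal.ofReal (‖f s‖ ^ p₁) := by
        refine setLIntegral_mono' measurableSet_Ioc fun s hs => ?_
        have h1 := key t s htτ hs.1.le (by linarith [hs.2])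
        have h2 : ‖f s - f t‖ₑ < ENNReal.ofReal (ε / 2) := by
          refine (h1.trans ?_).trans_lt hδε
          gcongr
          linarith [hs.2]
        rw [← ofReal_norm_eq_enorm, ENNReal.ofReal_lt_ofReal_iff (half_pos hε)] at h2
        have h3 : ε / 2 ≤ ‖f s‖ := by
          have := norm_sub_norm_le (f t) (f s)
          rw [norm_sub_rev] at this
          linarith
        gcongr
    _ ≤ ∫⁻ s in Ioi t, ENNReal.ofReal (‖f s‖ ^ p₁) :=
        lintegral_mono_set Ioc_subset_Ioi_self
end

section
/- Let τ ∈ ℝ and let Φ be an absolutely continuous nonnegative real-valued function on [τ,∞), and let ω₁, ω₂ be nonnegative locally integrable functions on [τ,∞) such that Φ'(t) ≤ ω₁(t)Φ(t) + ω₂(t) for almost every t ∈ [τ,∞). Assume there are nonnegative constants a₁, a₂, a₃ such that for all t ≥ τ: ∫_t^{t+1} ω₁(s) ds ≤ a₁, ∫_t^{t+1} ω₂(s) ds ≤ a₂, and ∫_t^{t+1} Φ(s) ds ≤ a₃. Then Φ(t+1) ≤ (a₂ + a₃) e^{a₁} for all t ≥ τ. -/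
open MeasureTheory Set

lemma ac_exp_neg {P : ℝ → ℝ} {a b : ℝ} (hP : AbsolutelyContinuousOnInterval P a b)
    (h0 : ∀ x ∈ uIcc a b, 0 ≤ P x) :
    AbsolutelyContinuousOnInterval (fun x => Real.exp (-P x)) a b := by
  have key : ∀ u v : ℝ, 0 ≤ u → u ≤ v → |Real.exp (-u) - Real.exp (-v)| ≤ |u - v| := by
    intro u v hu huv
    have h1 : Real.exp (-v) ≤ Real.exp (-u) := Real.exp_le_exp.2 (by linarith)
    have h2 : Real.exp (-u) ≤ 1 := Real.exp_le_one_iff.2 (by linarith)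
    have h3 : Real.exp (-v) = Real.exp (-u) * Real.exp (-(v - u)) := by
      rw [← Real.exp_add]; congr 1; ring
    have h4 := Real.add_one_le_exp (-(v - u))
    have h5 := Real.exp_pos (-u)
    rw [abs_of_nonneg (by linarith), abs_of_nonpos (by linarith)]
    nlinarith
  rw [absolutelyContinuousOnInterval_iff] at hP ⊢
  intro ε hε
  obtain ⟨δ, hδ, h⟩ := hP ε hε
  refine ⟨δ, hδ, fun E hE hs => lt_of_le_of_lt (Finset.sum_le_sum ?_) (h E hE hs)⟩
  intro i hi
  have hu := h0 _ (hE.left i hi).left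
  have hv := h0 _ (hE.left i hi).right
  rw [Real.dist_eq, Real.dist_eq]
  rcases le_total (P (E.2 i).1) (P (E.2 i).2) with h | h
  · exact key _ _ hu h
  · rw [abs_sub_comm, abs_sub_comm (P _)]
    exact key _ _ hv h

/-- The uniform Gronwall lemma: if `Φ ≥ 0` is absolutely continuous on `[τ,∞)` with
`Φ' ≤ ω₁ Φ + ω₂` a.e., and the integrals of `ω₁, ω₂, Φ` over every interval `[t, t+1]`,
`t ≥ τ`, are bounded by `a₁, a₂, a₃` respectively, then `Φ(t+1) ≤ (a₂ + a₃) e^{a₁}`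
for all `t ≥ τ`. -/
theorem uniform_gronwall
    (τ : ℝ) (Φ Φ' ω₁ ω₂ : ℝ → ℝ) (a₁ a₂ a₃ : ℝ)
    (ha₁ : 0 ≤ a₁) (ha₂ : 0 ≤ a₂) (ha₃ : 0 ≤ a₃)
    (hΦnonneg : ∀ t : ℝ, τ ≤ t → 0 ≤ Φ t)
    (hΦ'int : ∀ a b : ℝ, τ ≤ a → a ≤ b → IntervalIntegrable Φ' volume a b)
    (hAC : ∀ a b : ℝ, τ ≤ a → a ≤ b → Φ b - Φ a = ∫ s in a..b, Φ' s)
    (hω₁nonneg : ∀ t : ℝ, τ ≤ t → 0 ≤ ω₁ t)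
    (hω₂nonneg : ∀ t : ℝ, τ ≤ t → 0 ≤ ω₂ t)
    (hω₁int : ∀ a b : ℝ, τ ≤ a → a ≤ b → IntervalIntegrable ω₁ volume a b)
    (hω₂int : ∀ a b : ℝ, τ ≤ a → a ≤ b → IntervalIntegrable ω₂ volume a b)
    (hΦint : ∀ a b : ℝ, τ ≤ a → a ≤ b → IntervalIntegrable Φ volume a b)
    (hdiff : ∀ᵐ t ∂(volume : Measure ℝ), τ ≤ t → Φ' t ≤ ω₁ t * Φ t + ω₂ t)
    (hbd₁ : ∀ t : ℝ, τ ≤ t → (∫ s in t..(t + 1), ω₁ s) ≤ a₁)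
    (hbd₂ : ∀ t : ℝ, τ ≤ t → (∫ s in t..(t + 1), ω₂ s) ≤ a₂)
    (hbd₃ : ∀ t : ℝ, τ ≤ t → (∫ s in t..(t + 1), Φ s) ≤ a₃) :
    ∀ t : ℝ, τ ≤ t → Φ (t + 1) ≤ (a₂ + a₃) * Real.exp a₁ := by
  intro t ht
  have htb : t ≤ t + 1 := by linarith
  set b := t + 1 with hb
  set P : ℝ → ℝ := fun x => ∫ s in t..x, ω₁ s with hPdef
  set F : ℝ → ℝ := fun x => Φ t + ∫ s in t..x, Φ' s with hFdef
  have hF : ∀ x, t ≤ x → F x = Φ x := by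
    intro x hx
    have := hAC t x ht hx
    simp only [hFdef]; linarith
  have hP0 : ∀ x, t ≤ x → 0 ≤ P x := fun x hx =>
    intervalIntegral.integral_nonneg hx (fun u hu => hω₁nonneg u (ht.trans hu.1))
  have hPac : AbsolutelyContinuousOnInterval P t b :=
    (hω₁int t b ht htb).absolutelyContinuousOnInterval_intervalIntegral left_mem_uIcc
  have hEac : AbsolutelyContinuousOnInterval (fun x => Real.exp (-P x)) t b :=
    ac_exp_neg hPac (fun x hx => hP0 x (by rw [uIcc_of_le htb] at hx; exact hx.1))
  have hFac : AbsolutelyContinuousOnInterval F t b := by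
    have h1 := (hΦ'int t b ht htb).absolutelyContinuousOnInterval_intervalIntegral
      (left_mem_uIcc)
    have h2 : AbsolutelyContinuousOnInterval (fun _ : ℝ => Φ t) t b :=
      ((LipschitzWith.const (Φ t)).lipschitzOnWith).absolutelyContinuousOnInterval
    exact h2.add h1
  have hGac := hEac.fun_mul hFac
  have hle : ∀ᵐ x, x ∈ Icc t b → deriv (fun x => Real.exp (-P x) * F x) x ≤ ω₂ x := by
    filter_upwards [hdiff, (hω₁int t b ht htb).ae_hasDerivAt_integral,
      (hΦ'int t b ht htb).ae_hasDerivAt_integral] with x hx h1 h2 hxI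
    have hxu : x ∈ uIcc t b := by rwa [uIcc_of_le htb]
    have d1 : HasDerivAt P (ω₁ x) x := h1 hxu t left_mem_uIcc
    have d2 : HasDerivAt F (Φ' x) x := (h2 hxu t left_mem_uIcc).const_add _
    have d3 : HasDerivAt (fun x => Real.exp (-P x) * F x)
        (Real.exp (-P x) * (-ω₁ x) * F x + Real.exp (-P x) * Φ' x) x := d1.neg.exp.mul d2
    rw [d3.deriv]
    have hxt : τ ≤ x := ht.trans hxI.1
    have h3 := hx hxt
    have h4 := hω₂nonneg x hxt
    have h5 : Real.exp (-P x) ≤ 1 := Real.exp_le_one_iff.2 (by linarith [hP0 x hxI.1])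
    have h6 := Real.exp_pos (-P x)
    rw [hF x hxI.1]
    nlinarith [mul_le_mul_of_nonneg_left h3 h6.le]
  have main : ∀ s ∈ Icc t b, Real.exp (-P b) * Φ b - a₂ ≤ Φ s := by
    intro s hs
    have hsub : uIcc s b ⊆ uIcc t b := by
      rw [uIcc_of_le htb, uIcc_of_le hs.2]; exact Icc_subset_Icc_left hs.1
    have hG := hGac.mono hsub
    have e1 := hG.integral_deriv_eq_sub
    have e2 := intervalIntegral.integral_mono_ae_restrict hs.2 hG.intervalIntegrable_deriv
      (hω₂int s b (ht.trans hs.1) hs.2) (by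
        refine (ae_restrict_iff' measurableSet_Icc).2 ?_
        filter_upwards [hle] with x hx hxs
        exact hx ⟨hs.1.trans hxs.1, hxs.2⟩)
    have e3 := intervalIntegral.integral_add_adjacent_intervals (hω₂int t s ht hs.1)
      (hω₂int s b (ht.trans hs.1) hs.2)
    have e4 : 0 ≤ ∫ x in t..s, ω₂ x :=
      intervalIntegral.integral_nonneg hs.1 (fun u hu => hω₂nonneg u (ht.trans hu.1))
    have e5 := hbd₂ t ht
    rw [hF b htb, hF s hs.1] at e1
    have h5 : Real.exp (-P s) ≤ 1 := Real.exp_le_one_iff.2 (by linarith [hP0 s hs.1])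
    have e6 := mul_le_mul_of_nonneg_right h5 (hΦnonneg s (ht.trans hs.1))
    linarith
  have fin := intervalIntegral.integral_mono_on htb intervalIntegrable_const
    (hΦint t b ht htb) main
  rw [intervalIntegral.integral_const] at fin
  have hb1 : b - t = 1 := by rw [hb]; ring
  rw [hb1, one_smul] at fin
  have h3 := hbd₃ t ht
  have h1 : P b ≤ a₁ := hbd₁ t ht
  have h7 : Real.exp (-P b) * Φ b ≤ a₂ + a₃ := by linarith
  calc Φ b = (Real.exp (-P b) * Φ b) * Real.exp (P b) := by
        rw [mul_right_comm, ← Real.exp_add]; simp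
    _ ≤ (a₂ + a₃) * Real.exp (P b) := by gcongr
    _ ≤ (a₂ + a₃) * Real.exp a₁ := by gcongr
end

section
/- Let t₀ ≥ 0, θ ∈ (0, 1/2], and c_ν, c_λ > 0. Let Φ : [t₀,∞) → [0,∞) be absolutely continuous with Φ(t) → 0 as t → ∞, and let D : [t₀,∞) → [0,∞) be measurable. Assume that for almost every t ≥ t₀ one has Φ'(t) ≤ −c_ν D(t)² and Φ(t)^{1−θ} ≤ c_λ D(t). Then D is integrable on [t₀,∞) and, for every t ≥ t₀, ∫_t^∞ D(s) ds ≤ (c_λ / (θ c_ν)) Φ(t)^θ. -/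
open MeasureTheory Set Filter

/-- The key integration step in the Łojasiewicz–Simon convergence argument: if `Φ ≥ 0` is
absolutely continuous with `Φ(t) → 0` as `t → ∞`, `D ≥ 0` is measurable, and a.e. on `[t₀,∞)`
one has `Φ' ≤ −c_ν D²` and `Φ^{1−θ} ≤ c_λ D`, then `D` is integrable on `[t₀,∞)` and
`∫_t^∞ D ≤ (c_λ/(θ c_ν)) Φ(t)^θ` for every `t ≥ t₀`. -/
theorem integrable_and_tail_bound_of_lojasiewicz
    (t₀ θ cν clam : ℝ) (ht₀ : 0 ≤ t₀) (hθ : θ ∈ Ioc (0 : ℝ) (1 / 2))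
    (hcν : 0 < cν) (hclam : 0 < clam)
    (Φ Φ' D : ℝ → ℝ)
    (hΦnonneg : ∀ t : ℝ, t₀ ≤ t → 0 ≤ Φ t)
    (hDnonneg : ∀ t : ℝ, t₀ ≤ t → 0 ≤ D t)
    (hDmeas : Measurable D)
    (hΦ'int : ∀ a b : ℝ, t₀ ≤ a → a ≤ b → IntervalIntegrable Φ' volume a b)
    (hAC : ∀ a b : ℝ, t₀ ≤ a → a ≤ b → Φ b - Φ a = ∫ s in a..b, Φ' s)
    (hΦ0 : Tendsto Φ atTop (nhds 0))
    (hdiff : ∀ᵐ t ∂(volume : Measure ℝ), t₀ ≤ t →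
      Φ' t ≤ -cν * D t ^ 2 ∧ Φ t ^ (1 - θ) ≤ clam * D t) :
    IntegrableOn D (Ici t₀) ∧
      ∀ t : ℝ, t₀ ≤ t → (∫ s in Ioi t, D s) ≤ (clam / (θ * cν)) * Φ t ^ θ := by
  obtain ⟨hθ0, hθ1⟩ := hθ
  have hc : 0 < clam / (θ * cν) := by positivity
  have hanti : ∀ a b : ℝ, t₀ ≤ a → a ≤ b → Φ b ≤ Φ a := by
    intro a b ha hab
    have h1 : ∫ s in a..b, Φ' s ≤ ∫ s in a..b, (0 : ℝ) := by
      apply intervalIntegral.integral_mono_ae_restrict hab (hΦ'int a b ha hab) (by simp)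
      rw [Filter.EventuallyLE, ae_restrict_iff' measurableSet_Icc]
      filter_upwards [hdiff] with x hx hxm
      have := (hx (ha.trans hxm.1)).1
      have h2 : 0 ≤ cν * D x ^ 2 := by positivity
      linarith
    have h2 := hAC a b ha hab
    simp only [intervalIntegral.integral_zero] at h1
    linarith
  have hmono : ∀ a b : ℝ, t₀ ≤ a → a ≤ b →
      MonotoneOn (fun x => -(Φ x ^ θ)) (uIcc a b) := by
    intro a b ha hab x hx y hy hxy
    rw [uIcc_of_le hab] at hx hy
    have := Real.rpow_le_rpow (hΦnonneg y (ha.trans hy.1)) (hanti x y (ha.trans hx.1) hxy) hθ0.le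
    simpa using this
  have key : ∀ a b : ℝ, t₀ ≤ a → a ≤ b →
      ∀ᵐ x ∂(volume : Measure ℝ), x ∈ Icc a b →
        D x ≤ clam / (θ * cν) * deriv (fun x => -(Φ x ^ θ)) x := by
    intro a b ha hab
    have hna : ∀ᵐ x ∂(volume : Measure ℝ), x ≠ a := by simp [ae_iff, measure_singleton]
    have hnb : ∀ᵐ x ∂(volume : Measure ℝ), x ≠ b := by simp [ae_iff, measure_singleton]
    filter_upwards [hdiff, (hΦ'int a b ha hab).ae_hasDerivAt_integral, hna, hnb]
      with x hx hder hxa hxb hxm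
    have hax : a < x := lt_of_le_of_ne hxm.1 (Ne.symm hxa)
    have hxb2 : x < b := lt_of_le_of_ne hxm.2 hxb
    have hx0 : t₀ ≤ x := ha.trans hxm.1
    obtain ⟨h1, h2⟩ := hx hx0
    have hD := hDnonneg x hx0
    have hnear : ∀ᶠ y in nhds x, y ∈ Ioo a b := Ioo_mem_nhds hax hxb2
    have hΦd : HasDerivAt Φ (Φ' x) x := by
      have h3 := (hder (by rwa [uIcc_of_le hab]) a (by simp)).const_add (Φ a)
      refine h3.congr_of_eventuallyEq ?_
      filter_upwards [hnear] with y hy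
      have := hAC a y ha hy.1.le
      linarith
    rcases (hΦnonneg x hx0).eq_or_lt with h0 | hpos
    · have hmin : IsLocalMin Φ x := by
        filter_upwards [hnear] with y hy
        rw [← h0]
        exact hΦnonneg y (ha.trans hy.1.le)
      have hmax : IsLocalMax (fun x => -(Φ x ^ θ)) x := by
        filter_upwards [hnear] with y hy
        rw [← h0, Real.zero_rpow hθ0.ne']
        have := Real.rpow_nonneg (hΦnonneg y (ha.trans hy.1.le)) θ
        linarith
      rw [hmax.deriv_eq_zero, mul_zero]
      have hz := hmin.hasDerivAt_eq_zero hΦd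
      rw [hz] at h1
      by_contra hlt
      push Not at hlt
      have : 0 < cν * D x ^ 2 := by positivity
      linarith
    · have hg := (hΦd.rpow_const (p := θ) (Or.inl hpos.ne')).neg
      have hg' : deriv (fun x => -(Φ x ^ θ)) x = -(Φ' x * θ * Φ x ^ (θ - 1)) := hg.deriv
      rw [hg']
      have hP : 0 < Φ x ^ (θ - 1) := Real.rpow_pos_of_pos hpos _
      have hPQ : Φ x ^ (θ - 1) * Φ x ^ (1 - θ) = 1 := by
        rw [← Real.rpow_add hpos]; simp
      generalize Φ x ^ (θ - 1) = P at *
      have h4 : 1 ≤ P * (clam * D x) := by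
        rw [← hPQ]; gcongr
      have h5 : D x ≤ P * clam * D x ^ 2 := by nlinarith
      have h6 : P * clam * D x ^ 2 = clam / (θ * cν) * ((cν * D x ^ 2) * θ * P) := by
        field_simp
      rw [h6] at h5
      refine h5.trans ?_
      have h7 : cν * D x ^ 2 ≤ -Φ' x := by linarith
      have h8 : -(Φ' x * θ * P) = (-Φ' x) * θ * P := by ring
      rw [h8]
      gcongr
  have hgint : ∀ a b : ℝ, t₀ ≤ a → a ≤ b → IntervalIntegrable
      (fun x => clam / (θ * cν) * deriv (fun x => -(Φ x ^ θ)) x) volume a b := by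
    intro a b ha hab
    exact (hmono a b ha hab).intervalIntegrable_deriv.const_mul _
  have hDint : ∀ a b : ℝ, t₀ ≤ a → a ≤ b → IntervalIntegrable D volume a b := by
    intro a b ha hab
    refine (hgint a b ha hab).mono_fun hDmeas.aestronglyMeasurable ?_
    rw [Filter.EventuallyLE, ae_restrict_iff' measurableSet_uIoc, uIoc_of_le hab]
    filter_upwards [key a b ha hab] with x hx hxm
    rw [Real.norm_of_nonneg (hDnonneg x (ha.trans hxm.1.le))]
    exact (hx ⟨hxm.1.le, hxm.2⟩).trans (Real.le_norm_self _)
  have hbound : ∀ a b : ℝ, t₀ ≤ a → a ≤ b →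
      ∫ s in a..b, D s ≤ clam / (θ * cν) * Φ a ^ θ := by
    intro a b ha hab
    have h1 : ∫ s in a..b, D s ≤
        ∫ s in a..b, clam / (θ * cν) * deriv (fun x => -(Φ x ^ θ)) s := by
      apply intervalIntegral.integral_mono_ae_restrict hab (hDint a b ha hab) (hgint a b ha hab)
      rw [Filter.EventuallyLE, ae_restrict_iff' measurableSet_Icc]
      exact key a b ha hab
    rw [intervalIntegral.integral_const_mul] at h1
    refine h1.trans ?_
    gcongr
    have h2 := (hmono a b ha hab).intervalIntegral_deriv_mem_uIcc
    have h3 := hmono a b ha hab left_mem_uIcc right_mem_uIcc hab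
    rw [uIcc_of_le (by simpa using h3)] at h2
    have h4 := Real.rpow_nonneg (hΦnonneg b (ha.trans hab)) θ
    have h5 := h2.2
    linarith
  have hI : IntegrableOn D (Ioi t₀) := by
    refine integrableOn_Ioi_of_intervalIntegral_norm_bounded (l := atTop) (b := fun x : ℝ => x)
      (clam / (θ * cν) * Φ t₀ ^ θ) t₀ ?_ tendsto_id ?_
    · intro i
      rcases le_total t₀ i with h | h
      · exact (hDint t₀ i le_rfl h).1
      · simp [Ioc_eq_empty_of_le h]
    · filter_upwards [eventually_ge_atTop t₀] with i hi
      refine le_trans (le_of_eq ?_) (hbound t₀ i le_rfl hi)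
      apply intervalIntegral.integral_congr
      intro x hx
      rw [uIcc_of_le hi] at hx
      exact Real.norm_of_nonneg (hDnonneg x hx.1)
  refine ⟨by rwa [_root_.integrableOn_Ici_iff_integrableOn_Ioi], ?_⟩
  intro t ht
  refine le_of_tendsto (intervalIntegral_tendsto_integral_Ioi t
    (hI.mono_set (Ioi_subset_Ioi ht)) tendsto_id) ?_
  filter_upwards [eventually_ge_atTop t] with i hi
  exact hbound t i ht hi
end
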